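/- Let B be a real Banach space and μ ≥ 0 a finite Borel measure on B concentrated on a σ-compact set. Let f : B → ℝ be a bounded Lipschitz function and ε > 0. Then there exists a sequence (f_n) of smooth cylindrical functions f_n : B → ℝ with inf_B f ≤ f_n ≤ sup_B f on B and sup_n Lip(f_n) ≤ Lip(f) + ε, such that f_n(x) → f(x) and limsup_n ‖d_x f_n‖_{B*} ≤ lip_a(f)(x) for μ-almost every x ∈ B. -/

import Mathlib

open Metric Set Filter ENNReal MeasureTheory

/-- `lipOn f E` is the Lipschitz constant (valued in `ℝ≥0∞`) of `f : X → ℝ` restricted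
to the set `E ⊆ X`, namely `Lip(f; E)`. -/
noncomputable def lipOn {X : Type*} [MetricSpace X] (f : X → ℝ) (E : Set X) : ℝ≥0∞ :=
  ⨆ (x : E) (y : E), edist (f x) (f y) / edist (x : X) (y : X)

/-- `asympSlope f x` is the asymptotic slope `lip_a(f)(x) = inf_{r>0} Lip(f; B_r(x))`. -/
noncomputable def asympSlope {X : Type*} [MetricSpace X] (f : X → ℝ) (x : X) : ℝ≥0∞ :=
  ⨅ (r : ℝ) (_ : 0 < r), lipOn f (Metric.ball x r)

/-- A smooth cylindrical function on a Banach space `B`: a function of the form `g ∘ p`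
where `p : B → V` is a bounded linear operator into a finite-dimensional normed space `V`
and `g : V → ℝ` is infinitely differentiable, bounded and Lipschitz. -/
def IsCylindrical {B : Type*} [NormedAddCommGroup B] [NormedSpace ℝ B] (f : B → ℝ) : Prop :=
  ∃ (V : Type) (_ : NormedAddCommGroup V) (_ : NormedSpace ℝ V),
    FiniteDimensional ℝ V ∧ ∃ (p : B →L[ℝ] V) (g : V → ℝ),
      ContDiff ℝ (⊤ : ℕ∞) g ∧ (∃ C, ∀ v, |g v| ≤ C) ∧ (∃ K, LipschitzWith K g) ∧ f = g ∘ p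

/-!
Cover a compact set `K` by small balls with centres `y j`, and let `p` be a continuous linear map
of norm at most one into some `ℝᵏ` that preserves the mutual distances of the `y j`. For each `j`
take the cone with apex `(p (y j), f (y j))` whose slope is the Lipschitz constant of `f` on a
small ball around `y j` plus `δ`, steepened to `Lip(f) + 2δ` far away. On `K` the lower envelope
of these cones, composed with `p`, is close to `f`. Because of the surplus `δ` in the slopes, a
cone with a distant apex lies well above the envelope at `p x`, so near `p x` the envelope only
has the slopes of those cones whose `y j` is close to `x`, and these are at most
`Lip(f; B_ε(x)) + δ`. Clamping to the range of `f` and mollifying on `ℝᵏ` preserve these bounds.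
Finally, let `δ → 0` along compact sets increasing to a σ-compact one.
-/

open scoped NNReal Topology Convolution

section LipOn

variable {X : Type*} [MetricSpace X] {f : X → ℝ} {E : Set X}

lemma lipOn_le_coe_iff {K : ℝ≥0} : lipOn f E ≤ K ↔ LipschitzOnWith K f E := by
  refine ⟨fun h x hx y hy ↦ ?_, fun h ↦ iSup₂_le fun x y ↦ div_le_of_le_mul (h x.2 y.2)⟩
  obtain rfl | hxy := eq_or_ne x y
  · simp
  · have hquot : edist (f x) (f y) / edist x y ≤ lipOn f E :=
      le_iSup₂ (f := fun x y : E ↦ edist (f x) (f y) / edist (x : X) y) ⟨x, hx⟩ ⟨y, hy⟩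
    exact (ENNReal.div_le_iff (edist_pos.2 hxy).ne' (edist_ne_top x y)).1 (hquot.trans h)

lemma lipschitzOnWith_toNNReal_lipOn (h : lipOn f E ≠ ⊤) :
    LipschitzOnWith (lipOn f E).toNNReal f E :=
  lipOn_le_coe_iff.1 (ENNReal.coe_toNNReal h).ge

lemma exists_isLeast_lipschitzOnWith {K : ℝ≥0} (hf : LipschitzOnWith K f E) :
    ∃ c, IsLeast {s | LipschitzOnWith s f E} c := by
  have hfin : lipOn f E ≠ ⊤ := ne_top_of_le_ne_top coe_ne_top (lipOn_le_coe_iff.2 hf)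
  refine ⟨_, lipschitzOnWith_toNNReal_lipOn hfin, fun s hs ↦ ?_⟩
  exact (ENNReal.toNNReal_mono coe_ne_top (lipOn_le_coe_iff.2 hs)).trans_eq (toNNReal_coe s)

lemma limsup_le_asympSlope {α : Type*} {l : Filter α} {x : X} {u : α → ℝ≥0∞} {δ : α → ℝ≥0}
    (hδ : Tendsto δ l (𝓝 0))
    (hu : ∀ᶠ n in l, ∀ s : ℝ≥0, LipschitzOnWith s f (ball x (δ n)) → u n ≤ s + δ n) :
    limsup u l ≤ asympSlope f x := by
  refine le_iInf₂ fun r hr ↦ ?_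
  obtain htop | hfin := eq_or_ne (lipOn f (ball x r)) ⊤
  · simp [htop]
  set s := (lipOn f (ball x r)).toNNReal with hs
  have hlim : Tendsto (fun n ↦ (s : ℝ≥0∞) + δ n) l (𝓝 s) := by
    simpa using tendsto_const_nhds.add (ENNReal.tendsto_coe.2 hδ)
  rw [← ENNReal.coe_toNNReal hfin, ← hs]
  obtain rfl | _ := l.eq_or_neBot
  · simp
  rw [← hlim.limsup_eq]
  have hsmall : ∀ᶠ n in l, (δ n : ℝ) < r :=
    (NNReal.tendsto_coe.2 hδ).eventually_lt_const hr
  refine limsup_le_limsup ?_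
  filter_upwards [hu, hsmall] with n hn hnr
  exact hn s ((lipschitzOnWith_toNNReal_lipOn hfin).mono (ball_subset_ball hnr.le))

end LipOn

section Mollification

variable {V : Type*} [NormedAddCommGroup V] [NormedSpace ℝ V] [FiniteDimensional ℝ V]

section Convolution

variable [MeasurableSpace V] [BorelSpace V] {μ : Measure V} [μ.IsAddHaarMeasure]
  {E : Type*} [NormedAddCommGroup E] [NormedSpace ℝ E]
  {φ : ContDiffBump (0 : V)} {G : V → E}

lemma normed_convolution_sub (hG : LocallyIntegrable G μ) (u w : V) :
    (φ.normed μ ⋆[ContinuousLinearMap.lsmul ℝ ℝ, μ] G) u -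
        (φ.normed μ ⋆[ContinuousLinearMap.lsmul ℝ ℝ, μ] G) w =
      (φ.normed μ ⋆[ContinuousLinearMap.lsmul ℝ ℝ, μ] fun v ↦ G (v + (u - w)) - G v) w := by
  have hint : ConvolutionExists (φ.normed μ) G (ContinuousLinearMap.lsmul ℝ ℝ) μ :=
    φ.hasCompactSupport_normed.convolutionExists_left _ φ.continuous_normed hG
  simp only [convolution_def, map_sub]
  rw [← integral_sub (hint u) (hint w)]
  congr 1 with t
  congr 3
  abel

variable [CompleteSpace E]

lemma normed_convolution_mem_closedBall (hG : AEStronglyMeasurable G μ) {x : V} {z : E} {R : ℝ}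
    (hGz : ∀ v ∈ ball x φ.rOut, G v ∈ closedBall z R) :
    (φ.normed μ ⋆[ContinuousLinearMap.lsmul ℝ ℝ, μ] G) x ∈ closedBall z R :=
  dist_convolution_le (dist_nonneg.trans (hGz x (mem_ball_self φ.rOut_pos)))
    φ.support_normed_eq.subset φ.nonneg_normed φ.integral_normed hG hGz

lemma lipschitzOnWith_normed_convolution (hG : Continuous G) {K : ℝ≥0} {s : Set V}
    (hK : LipschitzOnWith K G (thickening φ.rOut s)) :
    LipschitzOnWith K (φ.normed μ ⋆[ContinuousLinearMap.lsmul ℝ ℝ, μ] G) s := by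
  refine LipschitzOnWith.of_dist_le_mul fun u hu w hw ↦ ?_
  rw [dist_eq_norm, normed_convolution_sub hG.locallyIntegrable, ← mem_closedBall_zero_iff]
  refine normed_convolution_mem_closedBall
    (hG.comp (continuous_id.add continuous_const) |>.sub hG).aestronglyMeasurable fun v hv ↦ ?_
  have hvu : v + (u - w) ∈ ball u φ.rOut := by
    rwa [mem_ball_iff_norm, show v + (u - w) - u = v - w by abel, ← mem_ball_iff_norm]
  have hdist := hK.dist_le_mul _ (ball_subset_thickening hu _ hvu) _
    (ball_subset_thickening hw _ hv)
  rwa [dist_eq_norm, dist_eq_norm, add_sub_cancel_left, ← dist_eq_norm u,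
    ← mem_closedBall_zero_iff] at hdist

end Convolution

lemma exists_contDiff_approx {G : V → ℝ} {K : ℝ≥0} (hG : LipschitzWith K G) {m M : ℝ}
    (hGmM : ∀ v, G v ∈ Icc m M) {ρ : ℝ} (hρ : 0 < ρ) :
    ∃ g : V → ℝ, ContDiff ℝ (⊤ : ℕ∞) g ∧ (∀ v, g v ∈ Icc m M) ∧
      (∀ v, dist (g v) (G v) ≤ K * ρ) ∧
      ∀ (s : Set V) (C : ℝ≥0), LipschitzOnWith C G (thickening ρ s) → LipschitzOnWith C g s := by
  let _ : MeasurableSpace V := borel V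
  have _ : BorelSpace V := ⟨rfl⟩
  let φ : ContDiffBump (0 : V) := ⟨ρ / 2, ρ, half_pos hρ, half_lt_self hρ⟩
  let μ : Measure V := Measure.addHaar
  refine ⟨φ.normed μ ⋆[ContinuousLinearMap.lsmul ℝ ℝ, μ] G, ?_, fun v ↦ ?_, fun v ↦ ?_,
    fun s C hC ↦ lipschitzOnWith_normed_convolution hG.continuous hC⟩
  · exact φ.hasCompactSupport_normed.contDiff_convolution_left _ φ.contDiff_normed
      hG.continuous.locallyIntegrable
  · rw [Real.Icc_eq_closedBall] at hGmM ⊢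
    exact normed_convolution_mem_closedBall hG.continuous.aestronglyMeasurable fun w _ ↦ hGmM w
  · exact φ.dist_normed_convolution_le hG.continuous.aestronglyMeasurable
      fun w hw ↦ hG.dist_le_mul_of_le (mem_ball.1 hw).le

lemma exists_contDiff_mem_Icc_approx {G : V → ℝ} {K : ℝ≥0} (hG : LipschitzWith K G) {m M : ℝ}
    (hmM : m ≤ M) {η ρ : ℝ} (hη : 0 < η) (hρ : 0 < ρ) :
    ∃ g : V → ℝ, ContDiff ℝ (⊤ : ℕ∞) g ∧ (∀ v, g v ∈ Icc m M) ∧ LipschitzWith K g ∧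
      ∀ v, (∀ t ∈ Icc m M, dist (g v) t ≤ dist (G v) t + η) ∧
        ∀ s : ℝ≥0, LipschitzOnWith s G (ball v ρ) → LipschitzOnWith s g (ball v (ρ / 2)) := by
  let clamp : ℝ → ℝ := (↑) ∘ projIcc m M hmM
  have hclamp : LipschitzWith 1 clamp := by
    simpa using LipschitzWith.subtype_val (Icc m M) |>.comp (LipschitzWith.projIcc hmM)
  have hclamp_of_mem : ∀ t ∈ Icc m M, clamp t = t := fun t ht ↦
    congrArg Subtype.val (projIcc_of_mem hmM ht)
  have hclampG : LipschitzWith K (clamp ∘ G) := by simpa using hclamp.comp hG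
  obtain ⟨σ, hσ, hσρ, hση⟩ : ∃ σ : ℝ, 0 < σ ∧ σ ≤ ρ / 2 ∧ K * σ ≤ η := by
    obtain ⟨σ, hσ, hKσ⟩ := exists_pos_mul_lt hη K
    refine ⟨min (ρ / 2) σ, lt_min (half_pos hρ) hσ, min_le_left _ _, le_trans ?_ hKσ.le⟩
    gcongr
    exact min_le_right _ _
  obtain ⟨g, hg_smooth, hg_mem, hg_dist, hg_lip⟩ :=
    exists_contDiff_approx hclampG (fun v ↦ (projIcc m M hmM (G v)).2) hσ
  refine ⟨g, hg_smooth, hg_mem, lipschitzOnWith_univ.1 (hg_lip _ _ hclampG.lipschitzOnWith),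
    fun v ↦ ⟨fun t ht ↦ ?_, fun s hs ↦ hg_lip _ _ ?_⟩⟩
  · calc dist (g v) t ≤ dist (g v) (clamp (G v)) + dist (clamp (G v)) t := dist_triangle _ _ _
      _ ≤ η + dist (G v) t := by
        gcongr
        · exact (hg_dist v).trans hση
        · simpa [hclamp_of_mem t ht] using hclamp.dist_le_mul (G v) t
      _ = dist (G v) t + η := add_comm _ _
  · have hball : thickening σ (ball v (ρ / 2)) ⊆ ball v ρ :=
      (Metric.thickening_ball v σ (ρ / 2)).trans (ball_subset_ball (by linarith))
    simpa using hclamp.comp_lipschitzOnWith (hs.mono hball)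

end Mollification

section Net

lemma exists_fin_subset_iUnion_ball {X : Type*} [PseudoMetricSpace X] [Nonempty X] {K : Set X}
    (hK : TotallyBounded K) {η : ℝ} (hη : 0 < η) :
    ∃ (n : ℕ) (y : Fin (n + 1) → X), K ⊆ ⋃ i, ball (y i) η := by
  obtain ⟨t, ht, hKt⟩ := Metric.totallyBounded_iff.1 hK η hη
  obtain ⟨n, e, rfl⟩ := ht.fin_embedding
  refine ⟨n, Fin.cons (Classical.arbitrary X) e, hKt.trans ?_⟩
  simp only [biUnion_range]
  exact iUnion_subset fun i ↦ subset_iUnion_of_subset i.succ (by simp)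

lemma exists_continuousLinearMap_pi_norm_eq (𝕜 : Type*) [RCLike 𝕜] {E ι : Type*}
    [SeminormedAddCommGroup E] [NormedSpace 𝕜 E] [Fintype ι] (x : ι → E) :
    ∃ p : E →L[𝕜] (ι → 𝕜), LipschitzWith 1 p ∧ ∀ i, ‖p (x i)‖ = ‖x i‖ := by
  choose l hl_norm hl_eq using fun i ↦ exists_dual_vector'' 𝕜 (x i)
  let p : E →L[𝕜] (ι → 𝕜) := ContinuousLinearMap.pi l
  have hp : LipschitzWith 1 p := p.lipschitz.weaken <|
    ContinuousLinearMap.opNorm_le_bound _ zero_le_one fun v ↦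
      (pi_norm_le_iff_of_nonneg (mul_nonneg zero_le_one (norm_nonneg v))).2
        fun i ↦ (l i).le_of_opNorm_le (hl_norm i) v
  refine ⟨p, hp, fun i ↦ le_antisymm (by simpa using hp.dist_le_mul (x i) 0) ?_⟩
  simpa [p, hl_eq] using norm_le_pi_norm (p (x i)) i

end Net

section Cone

variable {X Y : Type*} [PseudoMetricSpace X] [PseudoMetricSpace Y] {h r : ℝ} {a A : ℝ≥0}

/-- The function growing like a cone with apex `(z, h)`, with slope `a` up to distance `r` of `z`
(at least) and the steeper slope `A` far away. So `a` can be adapted to a local Lipschitz constant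
while the growth at infinity is governed by a global one. -/
noncomputable def cone (z : Y) (h : ℝ) (a A : ℝ≥0) (r : ℝ) (v : Y) : ℝ :=
  h + max (a * dist v z) (A * (dist v z - r))

lemma cone_apex (z : Y) (hr : 0 ≤ r) : cone z h a A r z = h := by
  have : 0 ≤ A * r := by positivity
  simp [cone, this]

lemma cone_le_cone_add (haA : a ≤ A) {z v : Y} {z' v' : X} {η : ℝ} (hη : 0 ≤ η)
    (hdist : dist v z ≤ dist v' z' + η) : cone z h a A r v ≤ cone z' h a A r v' + A * η := by
  rw [cone, cone, add_assoc, max_add, add_le_add_iff_left]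
  refine max_le_max ?_ ?_
  · nlinarith [a.coe_nonneg, NNReal.coe_le_coe.2 haA]
  · nlinarith [A.coe_nonneg]

lemma lipschitzWith_cone (z : Y) (haA : a ≤ A) : LipschitzWith A (cone z h a A r) :=
  LipschitzWith.of_le_add_mul A fun v w ↦
    cone_le_cone_add haA dist_nonneg ((dist_triangle v w z).trans_eq (add_comm _ _))

lemma lipschitzOnWith_cone (z : Y) : LipschitzOnWith a (cone z h a A r) (closedBall z r) := by
  have hcone : ∀ v ∈ closedBall z r, cone z h a A r v = h + a * dist v z := fun v hv ↦ by
    rw [cone, max_eq_left]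
    exact (mul_nonpos_of_nonneg_of_nonpos A.coe_nonneg (sub_nonpos.2 hv)).trans (by positivity)
  refine LipschitzOnWith.of_le_add_mul a fun v hv w hw ↦ ?_
  rw [hcone v hv, hcone w hw, add_assoc, ← mul_add, add_comm (dist w z)]
  gcongr
  exact dist_triangle v w z

lemma add_mul_dist_le_cone {f : X → ℝ} {L c δ : ℝ≥0} {R : ℝ} {z : X} (hf : LipschitzWith L f)
    (hc : LipschitzOnWith c f (ball z R)) (hA : L + 2 * δ ≤ A) (hr : A * r ≤ δ * R) (x : X) :
    f x + δ * dist x z ≤ cone z (f z) (c + δ) A r x := by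
  rw [cone, NNReal.coe_add]
  by_cases hx : dist x z < R
  · have hfx : f x ≤ f z + c * dist x z :=
      hc.le_add_mul hx (mem_ball_self (dist_nonneg.trans_lt hx))
    linarith [le_max_left ((c + δ : ℝ) * dist x z) (A * (dist x z - r))]
  · have hA' : (L + 2 * δ : ℝ) * dist x z ≤ A * dist x z := by gcongr; exact_mod_cast hA
    have hδR : (δ : ℝ) * R ≤ δ * dist x z := by gcongr; exact not_lt.1 hx
    linarith [hf.le_add_mul x z, le_max_right ((c + δ : ℝ) * dist x z) (A * (dist x z - r))]

end Cone

section ConeEnvelope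

lemma lipschitzOnWith_finset_inf' {Y ι : Type*} [PseudoMetricSpace Y] {s : Set Y} {c : ℝ≥0}
    {I : Finset ι} (hI : I.Nonempty) {τ : ι → Y → ℝ}
    (hτ : ∀ w ∈ s, ∀ i ∈ I, τ i w = I.inf' hI (τ · w) → LipschitzOnWith c (τ i) s) :
    LipschitzOnWith c (fun v ↦ I.inf' hI (τ · v)) s := by
  refine LipschitzOnWith.of_le_add_mul c fun u hu w hw ↦ ?_
  obtain ⟨i, hi, hmin⟩ := I.exists_mem_eq_inf' hI (τ · w)
  calc I.inf' hI (τ · u) ≤ τ i u := I.inf'_le _ hi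
    _ ≤ τ i w + c * dist u w := (hτ w hw i hi hmin.symm).le_add_mul hu hw
    _ = I.inf' hI (τ · w) + c * dist u w := by rw [hmin]

variable {Y ι : Type*} [PseudoMetricSpace Y] [Fintype ι] [Nonempty ι]

/-- The lower envelope of finitely many cones, in the spirit of McShane's extension of a function
taking the value `h i` at the point `z i`, but with slopes `a i` that depend on the point. -/
noncomputable def coneEnvelope (z : ι → Y) (h : ι → ℝ) (a : ι → ℝ≥0) (A : ℝ≥0) (r : ℝ) (v : Y) :
    ℝ :=
  Finset.univ.inf' Finset.univ_nonempty fun i ↦ cone (z i) (h i) (a i) A r v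

variable {z : ι → Y} {h : ι → ℝ} {a : ι → ℝ≥0} {A : ℝ≥0} {r : ℝ}

lemma coneEnvelope_le_cone (i : ι) (v : Y) :
    coneEnvelope z h a A r v ≤ cone (z i) (h i) (a i) A r v :=
  Finset.inf'_le _ (Finset.mem_univ i)

lemma lipschitzWith_coneEnvelope (haA : ∀ i, a i ≤ A) :
    LipschitzWith A (coneEnvelope z h a A r) :=
  lipschitzOnWith_univ.1 <| lipschitzOnWith_finset_inf' _ fun _ _ i _ _ ↦
    (lipschitzWith_cone (z i) (haA i)).lipschitzOnWith

lemma lipschitzOnWith_coneEnvelope_ball (haA : ∀ i, a i ≤ A) {q : Y} {c δ : ℝ≥0} {η ρ : ℝ}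
    (hδ : 0 < δ)
    (hgap : ∀ i, coneEnvelope z h a A r q + δ * dist q (z i) ≤ cone (z i) (h i) (a i) A r q + η)
    (hηρ : η + 2 * A * ρ ≤ δ * (r - ρ)) (hac : ∀ i, dist q (z i) ≤ r - ρ → a i ≤ c) :
    LipschitzOnWith c (coneEnvelope z h a A r) (ball q ρ) := by
  refine lipschitzOnWith_finset_inf' _ fun w hw i _ hmin ↦ ?_
  -- The gap at `q` persists near `q`, up to the Lipschitz constant `A` of cone and envelope.
  have hactive : dist q (z i) ≤ r - ρ := by
    have hcone := (lipschitzWith_cone (h := h i) (r := r) (z i) (haA i)).le_add_mul q w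
    have henv := (lipschitzWith_coneEnvelope (z := z) (h := h) (r := r) haA).le_add_mul w q
    have hAw : A * dist w q ≤ A * ρ := by gcongr; exact (mem_ball.1 hw).le
    rw [dist_comm] at hcone
    change _ = coneEnvelope z h a A r w at hmin
    refine le_of_mul_le_mul_left ?_ (NNReal.coe_pos.2 hδ)
    linarith [hgap i]
  refine ((lipschitzOnWith_cone (z i)).mono fun u hu ↦ ?_).weaken (hac i hactive)
  exact mem_closedBall.2 <| (dist_triangle u q (z i)).trans (by linarith [mem_ball.1 hu])

end ConeEnvelope

section Pullback

variable {X Y : Type*} [PseudoMetricSpace X] [PseudoMetricSpace Y] {p : X → Y} {x : X} {ρ : ℝ}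

lemma dist_le_dist_map_add (hp : LipschitzWith 1 p) {y z : X}
    (hpyz : dist (p y) (p z) = dist y z) (hxy : dist x y ≤ ρ) :
    dist x z ≤ dist (p x) (p z) + 2 * ρ := by
  have hpxy : dist (p x) (p y) ≤ dist x y := by simpa using hp.dist_le_mul x y
  linarith [dist_triangle x y z, dist_triangle_left (p y) (p z) (p x)]

variable {A : ℝ≥0} {r : ℝ}

lemma cone_le_cone_map_add (hp : LipschitzWith 1 p) {y z : X}
    (hpyz : dist (p y) (p z) = dist y z) (hxy : dist x y ≤ ρ) {h : ℝ} {a : ℝ≥0} (haA : a ≤ A) :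
    cone z h a A r x ≤ cone (p z) h a A r (p x) + 2 * A * ρ :=
  (cone_le_cone_add haA (mul_nonneg zero_le_two (dist_nonneg.trans hxy))
    (dist_le_dist_map_add hp hpyz hxy)).trans_eq (by ring)

variable {ι : Type*} [Fintype ι] [Nonempty ι] {f : X → ℝ} {y : ι → X} {a : ι → ℝ≥0} {i : ι}

lemma coneEnvelope_comp_le (hp : LipschitzWith 1 p) (hf : LipschitzWith A f) (haA : a i ≤ A)
    (hr : 0 ≤ r) (hxy : dist x (y i) ≤ ρ) :
    coneEnvelope (p ∘ y) (f ∘ y) a A r (p x) ≤ f x + 2 * A * ρ := by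
  have hpxy : dist (p x) (p (y i)) ≤ dist x (y i) := by simpa using hp.dist_le_mul x (y i)
  have hcone := (lipschitzWith_cone (h := f (y i)) (r := r) (p (y i)) haA).le_add_mul
    (p x) (p (y i))
  calc coneEnvelope (p ∘ y) (f ∘ y) a A r (p x)
      ≤ cone (p (y i)) (f (y i)) (a i) A r (p x) := coneEnvelope_le_cone i (p x)
    _ ≤ f (y i) + A * dist (p x) (p (y i)) := by rwa [cone_apex (p (y i)) hr] at hcone
    _ ≤ f x + A * dist (y i) x + A * dist (p x) (p (y i)) := by
      gcongr
      exact hf.le_add_mul (y i) x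
    _ ≤ f x + A * ρ + A * ρ := by
      rw [dist_comm]
      gcongr
      exact hpxy.trans hxy
    _ = f x + 2 * A * ρ := by ring

lemma dist_coneEnvelope_comp_le (hp : LipschitzWith 1 p)
    (hpy : ∀ j, dist (p (y i)) (p (y j)) = dist (y i) (y j)) (hf : LipschitzWith A f)
    (haA : ∀ j, a j ≤ A) (hr : 0 ≤ r) (hxy : dist x (y i) ≤ ρ)
    (hcone : ∀ j, f x ≤ cone (y j) (f (y j)) (a j) A r x) :
    dist (coneEnvelope (p ∘ y) (f ∘ y) a A r (p x)) (f x) ≤ 2 * A * ρ := by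
  have hlower : f x - 2 * A * ρ ≤ coneEnvelope (p ∘ y) (f ∘ y) a A r (p x) :=
    Finset.le_inf' _ _ fun j _ ↦
      sub_le_iff_le_add.2 ((hcone j).trans (cone_le_cone_map_add hp (hpy j) hxy (haA j)))
  exact abs_sub_le_iff.2 ⟨sub_le_iff_le_add'.2 (coneEnvelope_comp_le hp hf (haA i) hr hxy),
    sub_le_comm.1 hlower⟩

lemma lipschitzOnWith_coneEnvelope_comp (hp : LipschitzWith 1 p)
    (hpy : ∀ j, dist (p (y i)) (p (y j)) = dist (y i) (y j)) (hf : LipschitzWith A f)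
    (haA : ∀ j, a j ≤ A) (hr : 0 ≤ r) (hxy : dist x (y i) ≤ ρ) {c δ : ℝ≥0} (hδ : 0 < δ)
    (hcone : ∀ j, f x + δ * dist x (y j) ≤ cone (y j) (f (y j)) (a j) A r x)
    (hρ : 6 * A * ρ ≤ δ * (r - ρ)) (hac : ∀ j, dist x (y j) ≤ r + ρ → a j ≤ c) :
    LipschitzOnWith c (coneEnvelope (p ∘ y) (f ∘ y) a A r) (ball (p x) ρ) := by
  refine lipschitzOnWith_coneEnvelope_ball haA hδ (η := 4 * A * ρ) (fun j ↦ ?_) (by linarith)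
    fun j hj ↦ hac j ?_
  · have hpxy : δ * dist (p x) (p (y j)) ≤ δ * dist x (y j) := by
      gcongr
      simpa using hp.dist_le_mul x (y j)
    have hupper := coneEnvelope_comp_le hp hf (haA i) hr hxy
    have hlower := cone_le_cone_map_add (r := r) hp (hpy j) hxy (h := f (y j)) (haA j)
    simp only [Function.comp_apply]
    linarith [hcone j]
  · rw [Function.comp_apply] at hj
    linarith [dist_le_dist_map_add hp (hpy j) hxy]

end Pullback

section Approximation

-- `r` is the distance up to which the cones keep their slope, `ρ` the mesh of the net.
lemma exists_scales {δ A : ℝ} (hδ : 0 < δ) (hδA : 2 * δ ≤ A) :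
    ∃ r ρ : ℝ, 0 < r ∧ 0 < ρ ∧ A * r ≤ δ * δ ∧ 2 * A * ρ ≤ δ ∧ 6 * A * ρ ≤ δ * (r - ρ) ∧
      r + ρ ≤ δ := by
  have hA : 0 < A := by linarith
  obtain ⟨r, hr, hr_one, hr_slope⟩ : ∃ r > 0, r ≤ 1 ∧ A * r ≤ δ * δ :=
    ⟨min 1 (δ * δ / A), by positivity, min_le_left _ _, by
      rw [← le_div_iff₀' hA]; exact min_le_right _ _⟩
  obtain ⟨ρ, hρ, hAρ⟩ : ∃ ρ > 0, 8 * A * ρ = δ * r :=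
    ⟨δ * r / (8 * A), by positivity, by field_simp⟩
  have hδρ : 2 * δ * ρ ≤ A * ρ := by gcongr
  have hδr : 2 * δ * r ≤ A * r := by gcongr
  have hδr' : δ * r ≤ δ * 1 := by gcongr
  have hρr : δ * ρ ≤ δ * r := by nlinarith
  refine ⟨r, ρ, hr, hρ, hr_slope, by nlinarith, by nlinarith, ?_⟩
  exact le_of_mul_le_mul_left (by linarith) hδ

variable {B : Type*} [NormedAddCommGroup B] [NormedSpace ℝ B] {f : B → ℝ} {L ε : ℝ≥0} {K : Set B}

lemma exists_isometricOn_net (hK : TotallyBounded K) {η : ℝ} (hη : 0 < η) :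
    ∃ (n : ℕ) (y : Fin (n + 1) → B) (ι : Type) (_ : Fintype ι) (p : B →L[ℝ] (ι → ℝ)),
      K ⊆ ⋃ i, ball (y i) η ∧ LipschitzWith 1 p ∧
        ∀ i j, dist (p (y i)) (p (y j)) = dist (y i) (y j) := by
  obtain ⟨n, y, hKy⟩ := exists_fin_subset_iUnion_ball hK hη
  obtain ⟨p, hp, hpy⟩ := exists_continuousLinearMap_pi_norm_eq ℝ
    fun ij : Fin (n + 1) × Fin (n + 1) ↦ y ij.1 - y ij.2
  refine ⟨n, y, _, inferInstance, p, hKy, hp, fun i j ↦ ?_⟩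
  simpa only [dist_eq_norm, map_sub] using hpy (i, j)

lemma exists_lipschitz_pi_approx (hf : LipschitzWith L f) (hK : TotallyBounded K) (hε : 0 < ε) :
    ∃ (ι : Type) (_ : Fintype ι) (p : B →L[ℝ] (ι → ℝ)) (G : (ι → ℝ) → ℝ) (ρ : ℝ),
      0 < ρ ∧ LipschitzWith 1 p ∧ LipschitzWith (L + ε) G ∧ ∀ x ∈ K, dist (G (p x)) (f x) ≤ ε ∧
        ∀ s, LipschitzOnWith s f (ball x ε) → LipschitzOnWith (s + ε) G (ball (p x) ρ) := by
  obtain ⟨δ, hδ, rfl⟩ : ∃ δ > 0, ε = 2 * δ :=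
    ⟨ε / 2, half_pos hε, (mul_div_cancel₀ ε two_ne_zero).symm⟩
  have hδA : 2 * (δ : ℝ) ≤ (L + 2 * δ : ℝ≥0) := by push_cast; linarith [L.coe_nonneg]
  obtain ⟨r, ρ, hr, hρ, hr_slope, hρ_dist, hρ_gap, hrρ⟩ :=
    exists_scales (NNReal.coe_pos.2 hδ) hδA
  obtain ⟨n, y, ι, _, p, hKy, hp, hpy⟩ := exists_isometricOn_net hK hρ
  choose c hc_lip hc_least using fun j ↦
    exists_isLeast_lipschitzOnWith (hf.lipschitzOnWith (s := ball (y j) δ))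
  have hcA : ∀ j, c j + δ ≤ L + 2 * δ := fun j ↦
    add_le_add (hc_least j hf.lipschitzOnWith) (le_mul_of_one_le_left' one_le_two)
  have hcone := fun x j ↦ add_mul_dist_le_cone hf (hc_lip j) le_rfl hr_slope x
  have hfA : LipschitzWith (L + 2 * δ) f := hf.weaken le_self_add
  refine ⟨ι, inferInstance, p, coneEnvelope (p ∘ y) (f ∘ y) (fun j ↦ c j + δ) (L + 2 * δ) r, ρ,
    hρ, hp, lipschitzWith_coneEnvelope hcA, fun x hx ↦ ?_⟩
  obtain ⟨i, hi⟩ := mem_iUnion.1 (hKy hx)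
  have hxy : dist x (y i) ≤ ρ := (mem_ball.1 hi).le
  refine ⟨(dist_coneEnvelope_comp_le hp (hpy i) hfA hcA hr.le hxy fun j ↦
    le_of_add_le_of_nonneg_left (hcone x j) (by positivity)).trans ?_, fun s hs ↦ ?_⟩
  · push_cast at hρ_dist ⊢
    linarith [δ.coe_nonneg]
  refine lipschitzOnWith_coneEnvelope_comp hp (hpy i) hfA hcA hr.le hxy hδ (hcone x) hρ_gap
    fun j hj ↦ ?_
  have hball : ball (y j) δ ⊆ ball x (2 * δ : ℝ≥0) :=
    ball_subset_ball' (by push_cast; linarith [dist_comm x (y j)])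
  exact add_le_add (hc_least j (hs.mono hball)) (le_mul_of_one_le_left' one_le_two)

lemma exists_isCylindrical_approx (hf : LipschitzWith L f) {m M : ℝ} (hfm : ∀ x, f x ∈ Icc m M)
    (hK : TotallyBounded K) (hε : 0 < ε) :
    ∃ F : B → ℝ, IsCylindrical F ∧ (∀ x, F x ∈ Icc m M) ∧ LipschitzWith (L + ε) F ∧
      ∀ x ∈ K, dist (F x) (f x) ≤ ε ∧
        ∀ s, LipschitzOnWith s f (ball x ε) → ‖fderiv ℝ F x‖ ≤ s + ε := by
  have hε' : ε / 2 ≤ ε := half_le_self ε.2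
  obtain ⟨ι, _, p, G, ρ, hρ, hp, hG_lip, hG⟩ := exists_lipschitz_pi_approx hf hK (half_pos hε)
  obtain ⟨g, hg_smooth, hg_mem, hg_lip, hg⟩ := exists_contDiff_mem_Icc_approx hG_lip
    ((hfm 0).1.trans (hfm 0).2) (NNReal.coe_pos.2 (half_pos hε)) hρ
  refine ⟨g ∘ p, ⟨ι → ℝ, inferInstance, inferInstance, inferInstance, p, g, hg_smooth,
    ⟨max |m| |M|, fun v ↦ abs_le_max_abs_abs (hg_mem v).1 (hg_mem v).2⟩, ⟨_, hg_lip⟩, rfl⟩,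
    fun x ↦ hg_mem (p x), ?_, fun x hx ↦ ⟨?_, fun s hs ↦ ?_⟩⟩
  · exact (hg_lip.comp hp).weaken (by rw [mul_one]; gcongr)
  · calc dist (g (p x)) (f x) ≤ dist (G (p x)) (f x) + (ε / 2 : ℝ≥0) := (hg (p x)).1 _ (hfm x)
      _ ≤ (ε / 2 : ℝ≥0) + (ε / 2 : ℝ≥0) := by gcongr; exact (hG x hx).1
      _ = ε := by rw [← NNReal.coe_add, add_halves]
  · have hG_ball : LipschitzOnWith (s + ε / 2) G (ball (p x) ρ) :=
      (hG x hx).2 s (hs.mono (ball_subset_ball (NNReal.coe_le_coe.2 hε')))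
    have hF_ball : LipschitzOnWith (s + ε / 2) (g ∘ p) (ball x (ρ / 2)) := by
      have hmaps : MapsTo p (ball x (ρ / 2)) (ball (p x) (ρ / 2)) := by
        simpa using hp.mapsTo_ball one_ne_zero x (ρ / 2)
      simpa using ((hg (p x)).2 _ hG_ball).comp hp.lipschitzOnWith hmaps
    refine (norm_fderiv_le_of_lipschitzOn ℝ (ball_mem_nhds x (half_pos hρ)) hF_ball).trans ?_
    exact_mod_cast add_le_add_right hε' s

theorem approx_with_cylindrical_ae_general {S : Set B} (hS : IsSigmaCompact S) (f : B → ℝ)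
    (hLip : ∃ K, LipschitzWith K f) (hBdd : ∃ C, ∀ x, |f x| ≤ C) (ε : ℝ) (hε : 0 < ε) :
    ∃ F : ℕ → B → ℝ, (∀ n, IsCylindrical (F n)) ∧
      (∀ n x, sInf (Set.range f) ≤ F n x ∧ F n x ≤ sSup (Set.range f)) ∧
      (∀ n, lipOn (F n) Set.univ ≤ lipOn f Set.univ + ENNReal.ofReal ε) ∧
      ∀ x ∈ S, Tendsto (fun n => F n x) atTop (nhds (f x)) ∧
        Filter.limsup (fun n => ENNReal.ofReal ‖fderiv ℝ (F n) x‖) atTop ≤ asympSlope f x := by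
  obtain ⟨K₀, hK₀⟩ := hLip
  obtain ⟨C, hC⟩ := hBdd
  have hL : lipOn f univ ≠ ⊤ :=
    ne_top_of_le_ne_top coe_ne_top (lipOn_le_coe_iff.2 hK₀.lipschitzOnWith)
  have hfm : ∀ x, f x ∈ Icc (sInf (range f)) (sSup (range f)) := fun x ↦
    ⟨csInf_le ⟨-C, forall_mem_range.2 fun x ↦ (abs_le.1 (hC x)).1⟩ (mem_range_self x),
      le_csSup ⟨C, forall_mem_range.2 fun x ↦ (abs_le.1 (hC x)).2⟩ (mem_range_self x)⟩
  obtain ⟨K, hK, rfl⟩ := hS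
  obtain ⟨δ, -, hδ, hδ_lim⟩ := exists_seq_strictAnti_tendsto' (Real.toNNReal_pos.2 hε)
  choose F hF_cyl hF_mem hF_lip hF using fun n ↦ exists_isCylindrical_approx
    (lipschitzOnWith_univ.1 (lipschitzOnWith_toNNReal_lipOn hL)) hfm
    (isCompact_accumulate hK n).totallyBounded (hδ n).1
  refine ⟨F, hF_cyl, hF_mem, fun n ↦ ?_, fun x hx ↦ ?_⟩
  · calc lipOn (F n) univ ≤ ((lipOn f univ).toNNReal + δ n : ℝ≥0) :=
          lipOn_le_coe_iff.2 (hF_lip n).lipschitzOnWith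
      _ = lipOn f univ + δ n := by rw [ENNReal.coe_add, ENNReal.coe_toNNReal hL]
      _ ≤ lipOn f univ + ENNReal.ofReal ε := by gcongr; exact coe_le_coe.2 (hδ n).2.le
  obtain ⟨k, hk⟩ := mem_iUnion.1 hx
  have hxK : ∀ᶠ n in atTop, x ∈ accumulate K n := by
    filter_upwards [eventually_ge_atTop k] with n hkn using mem_accumulate.2 ⟨k, hkn, hk⟩
  refine ⟨tendsto_iff_dist_tendsto_zero.2 ?_, limsup_le_asympSlope hδ_lim ?_⟩
  · exact squeeze_zero' (.of_forall fun n ↦ dist_nonneg) (hxK.mono fun n hn ↦ (hF n x hn).1)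
      (NNReal.tendsto_coe.2 hδ_lim)
  · filter_upwards [hxK] with n hn s hs
    rw [← ENNReal.coe_add, ← ENNReal.ofReal_coe_nnreal]
    exact ENNReal.ofReal_le_ofReal ((hF n x hn).2 s hs)

end Approximation

/-- Almost-everywhere version of the approximation theorem: if `μ` is a finite Borel measure
on a real Banach space `B` concentrated on a σ-compact set, and `f` is bounded Lipschitz,
then for every `ε > 0` there are smooth cylindrical `Fₙ` with `inf f ≤ Fₙ ≤ sup f`,
`Lip(Fₙ) ≤ Lip(f) + ε`, converging to `f` and with `limsupₙ ‖d_x Fₙ‖ ≤ lip_a(f)(x)`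
at `μ`-a.e. point. -/
theorem approx_with_cylindrical_ae {B : Type*} [NormedAddCommGroup B] [NormedSpace ℝ B]
    [CompleteSpace B] [MeasurableSpace B] [BorelSpace B]
    (μ : Measure B) [IsFiniteMeasure μ]
    (hconc : ∃ S : Set B, IsSigmaCompact S ∧ μ Sᶜ = 0)
    (f : B → ℝ) (hLip : ∃ K, LipschitzWith K f) (hBdd : ∃ C, ∀ x, |f x| ≤ C)
    (ε : ℝ) (hε : 0 < ε) :
    ∃ F : ℕ → B → ℝ, (∀ n, IsCylindrical (F n)) ∧
      (∀ n x, sInf (Set.range f) ≤ F n x ∧ F n x ≤ sSup (Set.range f)) ∧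
      (∀ n, lipOn (F n) Set.univ ≤ lipOn f Set.univ + ENNReal.ofReal ε) ∧
      ∀ᵐ x ∂μ, Tendsto (fun n => F n x) atTop (nhds (f x)) ∧
        Filter.limsup (fun n => ENNReal.ofReal ‖fderiv ℝ (F n) x‖) atTop ≤ asympSlope f x := by
  obtain ⟨S, hS, hμS⟩ := hconc
  obtain ⟨F, hF_cyl, hF_mem, hF_lip, hF⟩ := approx_with_cylindrical_ae_general hS f hLip hBdd ε hε
  exact ⟨F, hF_cyl, hF_mem, hF_lip, by filter_upwards [mem_ae_iff.2 hμS] with x hx using hF x hx⟩
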